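/- arXiv:1708.03010 — 2 statements merged into one kernel-verified Lean document; each statement's English description precedes it below -/
import Mathlib

section
/- Let K be a field of characteristic zero, and let S be a smooth K-algebra, essentially of finite type over K. Let I ⊆ S be a radical ideal and f ∈ I. Then the following are equivalent: (1) ∂(f) ∈ I for every K-linear derivation ∂ : S → S; (2) f ∈ I^{(2)}; (3) f^n ∈ I^{n+1} for some positive integer n. -/
universe u

/-- The `n`-th symbolic power of an ideal `I`:
`I^{(n)} = ⋂_{𝔭 ∈ Min(I)} (I^n R_𝔭 ∩ R)`, the intersection over the minimal primes `𝔭`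
of `I` of the preimages in `R` of `I^n R_𝔭` under the localization maps. -/
noncomputable def symbolicPower {R : Type*} [CommRing R] (I : Ideal R) (n : ℕ) : Ideal R :=
  ⨅ (P : Ideal R) (hP : P ∈ I.minimalPrimes),
    haveI : P.IsPrime := hP.1.1
    (Ideal.map (algebraMap R (Localization.AtPrime P)) (I ^ n)).comap
      (algebraMap R (Localization.AtPrime P))

namespace HublAux
open KaehlerDifferential TensorProduct

theorem formallySmooth_field (K L : Type*) [Field K] [CharZero K] [Field L] [Algebra K L] :
    Algebra.FormallySmooth K L := by
  obtain ⟨s, hs⟩ := exists_isTranscendenceBasis K L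
  have h1 : Algebra.IsAlgebraic (IntermediateField.adjoin K (Set.range ((↑) : s → L))) L := 
    hs.isAlgebraic_field
  exact .of_algebraicIndependent_of_isSeparable hs.1

theorem derivation_mem_smul {K S M : Type*} [CommRing K] [CommRing S] [Algebra K S]
    [Algebra.FormallySmooth K S] [AddCommGroup M] [Module S M] [Module K M] [IsScalarTower K S M]
    (I : Ideal S) (f : S) (h : ∀ D : Derivation K S S, D f ∈ I) (δ : Derivation K S M) :
    δ f ∈ I • (⊤ : Submodule S M) := by
  have h1 : D K S f ∈ I • (⊤ : Submodule S (Ω[S⁄K])) := by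
    obtain ⟨s, hs⟩ := (inferInstance : Module.Projective S (Ω[S⁄K]))
    rw [← hs (D K S f), Finsupp.linearCombination_apply]
    refine Submodule.sum_mem _ fun i _ => Submodule.smul_mem_smul ?_ trivial
    exact h (((Finsupp.lapply i).comp s).compDer (D K S))
  have h2 := Submodule.mem_map_of_mem (f := δ.liftKaehlerDifferential) h1
  rw [Submodule.map_smul''] at h2
  rw [← Derivation.liftKaehlerDifferential_comp_D δ f]
  exact Submodule.smul_mono le_rfl le_top h2

theorem derivation_pow_mem {K S : Type*} [CommRing K] [CommRing S] [Algebra K S]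
    (I : Ideal S) (D : Derivation K S S) (n : ℕ) (x : S) (hx : x ∈ I ^ (n + 1)) :
    D x ∈ I ^ n := by
  rw [pow_succ] at hx
  induction hx using Submodule.mul_induction_on' with
  | mem_mul_mem a ha b hb =>
    rw [D.leibniz, smul_eq_mul, smul_eq_mul]
    refine add_mem (Ideal.mul_mem_right _ _ ha) ?_
    cases n with
    | zero => simp
    | succ n =>
      have := derivation_pow_mem I D n a ha
      rw [pow_succ']
      exact Ideal.mul_mem_mul hb this
  | add a _ b _ h1 h2 => rw [map_add]; exact add_mem h1 h2

theorem three_imp_one {K S : Type*} [Field K] [CharZero K] [CommRing S] [Algebra K S]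
    (I : Ideal S) (hI : I.IsRadical) (f : S) (hf : f ∈ I) (n : ℕ) 
    (hn : f ^ n ∈ I ^ (n + 1)) (D : Derivation K S S) : D f ∈ I := by
  have key : ∀ k ≤ n, (n.descFactorial k : S) * (f ^ (n - k) * D f ^ k) ∈ I ^ (n - k + 1) := by
    intro k
    induction k with
    | zero => intro _; simpa using hn
    | succ k ih =>
      intro hk
      obtain ⟨m, hm⟩ : ∃ m, n - k = m + 1 := ⟨n - k - 1, by omega⟩
      have h1 := ih (by omega)
      have hm' : n - (k + 1) = m := by omega
      rw [Nat.descFactorial_succ]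
      rw [hm] at h1 ⊢
      rw [hm']
      have h2 := derivation_pow_mem I D _ _ h1
      have h3 : D ((n.descFactorial k : S) * (f ^ (m + 1) * D f ^ k)) =
          ((m + 1) * n.descFactorial k : ℕ) * (f ^ m * D f ^ (k + 1)) + 
          f ^ (m + 1) * ((n.descFactorial k : S) * D (D f ^ k)) := by
        simp [D.leibniz, D.leibniz_pow]
        ring
      rw [h3] at h2
      exact (Ideal.add_mem_iff_left _ (Ideal.mul_mem_right _ _ (Ideal.pow_mem_pow hf _))).1 h2
  have h := key n le_rfl
  simp only [Nat.descFactorial_self, Nat.sub_self, pow_zero, one_mul, zero_add, pow_one] at h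
  refine hI ⟨n, ?_⟩
  have h2 : D f ^ n = algebraMap K S ((n.factorial : K)⁻¹) * ((n.factorial : S) * D f ^ n) := by
    rw [← mul_assoc, ← map_natCast (algebraMap K S), ← map_mul, inv_mul_cancel₀, map_one, one_mul]
    exact_mod_cast n.factorial_ne_zero
  rw [h2]
  exact Ideal.mul_mem_left _ _ h

theorem mem_symbolicPower {R : Type*} [CommRing R] (I : Ideal R) (n : ℕ) (x : R) :
    x ∈ symbolicPower I n ↔ ∀ P ∈ I.minimalPrimes, ∃ s ∉ P, s * x ∈ I ^ n := by
  simp only [symbolicPower, Ideal.mem_iInf, Ideal.mem_comap]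
  refine forall₂_congr fun P hP => ?_
  have : P.IsPrime := hP.1.1
  rw [IsLocalization.algebraMap_mem_map_algebraMap_iff P.primeCompl]
  simp [Ideal.primeCompl]

theorem two_imp_one {K S : Type*} [CommRing K] [CommRing S] [Algebra K S]
    (I : Ideal S) (hI : I.IsRadical) (f : S) (hf : f ∈ I) 
    (h : f ∈ symbolicPower I 2) (D : Derivation K S S) : D f ∈ I := by
  rw [mem_symbolicPower] at h
  rw [← hI.radical, ← Ideal.sInf_minimalPrimes, Submodule.mem_sInf]
  intro P hP
  have hPp : Ideal.IsPrime P := hP.1.1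
  obtain ⟨s, hs, hsf⟩ := h P hP
  have h1 := derivation_pow_mem I D 1 _ hsf
  rw [D.leibniz, smul_eq_mul, smul_eq_mul, pow_one, 
    Ideal.add_mem_iff_left _ (Ideal.mul_mem_right _ _ hf)] at h1
  exact (hPp.mem_or_mem (hP.1.2 h1)).resolve_left hs

theorem one_imp_two {K S : Type u} [Field K] [CharZero K]
    [CommRing S] [Algebra K S] [Algebra.FormallySmooth K S]
    (I : Ideal S) (hI : I.IsRadical) (f : S) (hf : f ∈ I) 
    (h : ∀ D : Derivation K S S, D f ∈ I) : f ∈ symbolicPower I 2 := by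
  simp only [symbolicPower, Ideal.mem_iInf, Ideal.mem_comap]
  intro P hP
  have : P.IsPrime := hP.1.1
  let A := Localization.AtPrime P
  let κ := IsLocalRing.ResidueField A
  have hm : Ideal.map (algebraMap S A) I = IsLocalRing.maximalIdeal A := by
    rw [← Localization.AtPrime.map_eq_maximalIdeal]
    refine le_antisymm (Ideal.map_mono hP.1.2) (Ideal.map_le_iff_le_comap.2 fun x hx => ?_)
    obtain ⟨s, hs, n, hn⟩ : ∃ s ∉ P, ∃ n : ℕ, s * x ^ n ∈ I := by
      have h1 := Ideal.mem_map_of_mem (algebraMap S A) hx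
      rw [← IsLocalization.AtPrime.radical_map_of_mem_minimalPrimes A P I hP] at h1
      obtain ⟨n, hn⟩ := h1
      rw [← map_pow, IsLocalization.algebraMap_mem_map_algebraMap_iff P.primeCompl] at hn
      obtain ⟨s, hs, hsn⟩ := hn
      exact ⟨s, hs, n, hsn⟩
    rw [Ideal.mem_comap, IsLocalization.algebraMap_mem_map_algebraMap_iff P.primeCompl]
    refine ⟨s, hs, hI ⟨n + 1, ?_⟩⟩
    have : (s * x) ^ (n + 1) = s * x ^ n * (s ^ n * x) := by ring
    rw [this]
    exact Ideal.mul_mem_right _ _ hn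
  rw [Ideal.map_pow, hm]
  have : Algebra.FormallySmooth K κ := formallySmooth_field K κ
  have hinj := (Algebra.FormallySmooth.kerCotangentToTensor_injective_iff (R := K) (P := A) (A := κ)
    IsLocalRing.residue_surjective).2 inferInstance
  have hker : RingHom.ker (algebraMap A κ) = IsLocalRing.maximalIdeal A := IsLocalRing.ker_residue
  have hfm : algebraMap S A f ∈ RingHom.ker (algebraMap A κ) := by
    rw [hker, ← hm]; exact Ideal.mem_map_of_mem _ hf
  let δ : Derivation K S (κ ⊗[A] Ω[A⁄K]) :=
    ((((TensorProduct.mk A κ (Ω[A⁄K])) 1).compDer (D K A)).compAlgebraMap S)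
  have h1 := derivation_mem_smul I f h δ
  have h0 : I • (⊤ : Submodule S (κ ⊗[A] Ω[A⁄K])) = ⊥ := by
    rw [eq_bot_iff, Submodule.smul_le]
    intro r hr n _
    have : algebraMap A κ (algebraMap S A r) = 0 := by
      rw [← RingHom.mem_ker, hker, ← hm]; exact Ideal.mem_map_of_mem _ hr
    rw [Submodule.mem_bot, ← algebraMap_smul A, ← algebraMap_smul κ, this, zero_smul]
  rw [h0, Submodule.mem_bot] at h1
  have h2 : Ideal.toCotangent _ ⟨algebraMap S A f, hfm⟩ = 0 := by
    apply hinj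
    rw [kerCotangentToTensor_toCotangent, map_zero]
    exact h1
  rw [Ideal.toCotangent_eq_zero] at h2
  rw [← hker]
  exact h2

open Polynomial in
/-- Truncated arcs of a discrete valuation ring. -/
theorem exists_arc {K V : Type u} [Field K] [CharZero K] [CommRing V] [IsDomain V]
    [IsDiscreteValuationRing V] [Algebra K V] (g : V) (hg : g ≠ 0) (hgu : ¬ IsUnit g) :
    ∃ (κ : Type u) (_ : Field κ) (_ : Algebra K κ) (e : ℕ) (w : κ[X]) 
      (ψ : V →ₐ[K] κ[X] ⧸ Ideal.span {(X : κ[X]) ^ (e + 2)}), w.coeff 0 ≠ 0 ∧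
      ψ g = Ideal.Quotient.mk _ (X ^ (e + 1) * w) := by
  obtain ⟨τ, hτ⟩ := IsDiscreteValuationRing.exists_irreducible V
  obtain ⟨n, u, hu⟩ := IsDiscreteValuationRing.eq_unit_mul_pow_irreducible hg hτ
  obtain ⟨e, rfl⟩ : ∃ e, n = e + 1 := by
    cases n with
    | zero => exact absurd (by rw [hu]; simp) hgu
    | succ e => exact ⟨e, rfl⟩
  let κ := IsLocalRing.ResidueField V
  have hsm : Algebra.FormallySmooth K κ := formallySmooth_field K κ
  have hm : IsLocalRing.maximalIdeal V = Ideal.span {τ} := hτ.maximalIdeal_eq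
  let J : Ideal V := Ideal.span {τ ^ (e + 2)}
  let T := V ⧸ J
  have hJm : J ≤ IsLocalRing.maximalIdeal V := by
    rw [hm, Ideal.span_singleton_le_span_singleton]
    exact dvd_pow_self _ (by omega)
  let r : T →ₐ[K] κ := Ideal.Quotient.liftₐ J (IsScalarTower.toAlgHom K V κ) (fun a ha => by
    have := hJm ha
    rwa [← IsLocalRing.ker_residue (R := V)] at this)
  have hrmk : ∀ v : V, r (Ideal.Quotient.mk J v) = IsLocalRing.residue V v := fun v => rfl
  have hr : Function.Surjective r := fun y => by
    obtain ⟨v, rfl⟩ := IsLocalRing.residue_surjective y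
    exact ⟨Ideal.Quotient.mk J v, rfl⟩
  have hτJ : (Ideal.Quotient.mk J τ) ^ (e + 2) = 0 := by
    rw [← map_pow, Ideal.Quotient.eq_zero_iff_mem]
    exact Ideal.mem_span_singleton_self _
  have hrker : ∀ t : T, r t = 0 → ∃ t', t = Ideal.Quotient.mk J τ * t' := by
    intro t ht
    obtain ⟨v, rfl⟩ := Ideal.Quotient.mk_surjective t
    have : v ∈ IsLocalRing.maximalIdeal V := by
      rw [← IsLocalRing.ker_residue (R := V)]; exact ht
    rw [hm, Ideal.mem_span_singleton] at this
    obtain ⟨v', rfl⟩ := this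
    exact ⟨Ideal.Quotient.mk J v', map_mul _ _ _⟩
  have hnil : IsNilpotent (RingHom.ker (r : T →+* κ)) := by
    refine ⟨e + 2, ?_⟩
    have : RingHom.ker (r : T →+* κ) ≤ Ideal.span {Ideal.Quotient.mk J τ} := by
      intro t ht
      obtain ⟨t', rfl⟩ := hrker t ht
      exact Ideal.mul_mem_right _ _ (Ideal.mem_span_singleton_self _)
    have h2 := Ideal.pow_right_mono this (e + 2)
    rw [Ideal.span_singleton_pow, hτJ, Ideal.span_singleton_zero] at h2
    exact le_bot_iff.1 h2
  let σ : κ →ₐ[K] T := Algebra.FormallySmooth.liftOfSurjective (AlgHom.id K κ) r hr hnil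
  have hσ : ∀ x, r (σ x) = x := fun x => 
    Algebra.FormallySmooth.liftOfSurjective_apply (AlgHom.id K κ) r hr hnil x
  let τ' : T := Ideal.Quotient.mk J τ
  let Θ : κ[X] →+* T := Polynomial.eval₂RingHom (σ : κ →+* T) τ'
  have hΘX : Θ X = τ' := by simp [Θ]
  have hΘC : ∀ c, Θ (C c) = σ c := fun c => by simp [Θ]
  have hrΘ : ∀ p, r (Θ p) = p.coeff 0 := by
    intro p
    have h0 : r τ' = 0 := by
      rw [hrmk]
      change τ ∈ RingHom.ker (IsLocalRing.residue V)
      rw [IsLocalRing.ker_residue, hm]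
      exact Ideal.mem_span_singleton_self _
    conv_lhs => rw [← Polynomial.X_mul_divX_add p, map_add, map_mul, hΘX, hΘC, map_add, map_mul, h0, 
      zero_mul, zero_add, hσ]
  have hΘs : Function.Surjective Θ := by
    have : ∀ n : ℕ, ∀ t : T, ∃ p : κ[X], ∃ t' : T, t = Θ p + τ' ^ n * t' := by
      intro n
      induction n with
      | zero => intro t; exact ⟨0, t, by simp⟩
      | succ n ih =>
        intro t
        obtain ⟨p, t', rfl⟩ := ih t
        obtain ⟨tt, htt⟩ := hrker (t' - σ (r t')) (by rw [map_sub, hσ, sub_self])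
        refine ⟨p + X ^ n * C (r t'), tt, ?_⟩
        rw [map_add, map_mul, map_pow, hΘX, hΘC]
        have : t' = σ (r t') + τ' * tt := by rw [← htt]; ring
        conv_lhs => rw [this]
        ring
    intro t
    obtain ⟨p, t', h⟩ := this (e + 2) t
    exact ⟨p, by rw [h, hτJ]; simp⟩
  have hunit : ∀ t : T, r t ≠ 0 → IsUnit t := by
    intro t ht
    obtain ⟨v, rfl⟩ := Ideal.Quotient.mk_surjective t
    have : IsUnit v := by
      rw [hrmk] at ht
      by_contra hv
      exact ht ((IsLocalRing.residue_eq_zero_iff v).2 hv)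
    exact this.map _
  have hΘk : ∀ p, Θ p = 0 → p ∈ Ideal.span {(X : κ[X]) ^ (e + 2)} := by
    intro p hp
    rw [Ideal.mem_span_singleton]
    by_cases hp0 : p = 0
    · simp [hp0]
    obtain ⟨q, hq, hXq⟩ := Polynomial.exists_eq_pow_rootMultiplicity_mul_and_not_dvd p hp0 0
    rw [C_0, sub_zero] at hq hXq
    rw [X_dvd_iff] at hXq
    set k := p.rootMultiplicity 0
    rw [hq, map_mul, map_pow, hΘX, (hunit _ (by rw [hrΘ]; exact hXq)).mul_left_eq_zero,
      ← map_pow, Ideal.Quotient.eq_zero_iff_mem, Ideal.mem_span_singleton,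
      pow_dvd_pow_iff hτ.ne_zero hτ.not_isUnit] at hp
    rw [hq]
    exact Dvd.dvd.mul_right (pow_dvd_pow _ hp) _
  let Φ : T →+* κ[X] ⧸ Ideal.span {(X : κ[X]) ^ (e + 2)} :=
    (Ideal.Quotient.lift (RingHom.ker Θ) (Ideal.Quotient.mk (Ideal.span {(X : κ[X]) ^ (e + 2)})) 
      (fun a ha => Ideal.Quotient.eq_zero_iff_mem.2 (hΘk a ha))).comp 
      (RingHom.quotientKerEquivOfSurjective hΘs).symm.toRingHom
  have hΦ : ∀ p, Φ (Θ p) = Ideal.Quotient.mk _ p := by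
    intro p
    have : (RingHom.quotientKerEquivOfSurjective hΘs).symm (Θ p) = Ideal.Quotient.mk _ p := by
      rw [RingEquiv.symm_apply_eq]; rfl
    simp only [Φ, RingHom.comp_apply, RingEquiv.toRingHom_eq_coe, RingEquiv.coe_toRingHom, this, 
      Ideal.Quotient.lift_mk]
  let ψ : V →ₐ[K] κ[X] ⧸ Ideal.span {(X : κ[X]) ^ (e + 2)} :=
    { Φ.comp (Ideal.Quotient.mk J) with
      commutes' := fun a => by
        change Φ (Ideal.Quotient.mk J (algebraMap K V a)) = _
        have h1 : Ideal.Quotient.mk J (algebraMap K V a) = Θ (C (algebraMap K κ a)) := by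
          rw [hΘC, AlgHom.commutes]; rfl
        rw [h1, hΦ]; rfl }
  obtain ⟨w, hw⟩ := hΘs (Ideal.Quotient.mk J u)
  refine ⟨κ, inferInstance, inferInstance, e, w, ψ, ?_, ?_⟩
  · rw [← hrΘ, hw, hrmk]
    exact (u.isUnit.map (IsLocalRing.residue V)).ne_zero
  · change Φ (Ideal.Quotient.mk J g) = _
    rw [← hΦ, map_mul, map_pow, hΘX, hw, hu, map_mul, map_pow, mul_comm]

open Polynomial in
theorem not_arc {K S κ : Type u} [Field K] [CharZero K] [CommRing S] [Algebra K S]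
    [Field κ] [Algebra K κ] (e : ℕ) (w : κ[X]) (hw : w.coeff 0 ≠ 0)
    (ψ : S →ₐ[K] κ[X] ⧸ Ideal.span {(X : κ[X]) ^ (e + 2)}) (f : S) (I : Ideal S)
    (hf : ψ f = Ideal.Quotient.mk _ (X ^ (e + 1) * w))
    (hI : ∀ x ∈ I, ∃ y, ψ x = ψ f * y)
    (H : ∀ (M : Type u) [AddCommGroup M] [Module S M] [Module K M] [IsScalarTower K S M]
      (δ : Derivation K S M), δ f ∈ I • (⊤ : Submodule S M)) : False := by
  let M := κ[X] ⧸ Ideal.span {(X : κ[X]) ^ (e + 1)}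
  let fac : (κ[X] ⧸ Ideal.span {(X : κ[X]) ^ (e + 2)}) →ₐ[κ] M := Ideal.Quotient.factorₐ κ
    (by rw [Ideal.span_singleton_le_span_singleton]; exact pow_dvd_pow _ (by omega))
  have hfac : ∀ p, fac (Ideal.Quotient.mk _ p) = Ideal.Quotient.mk _ p := fun p => rfl
  let χ : S →ₐ[K] M := (fac.restrictScalars K).comp ψ
  let : Algebra S M := χ.toRingHom.toAlgebra
  have : IsScalarTower K S M := IsScalarTower.of_algebraMap_eq (fun a => (χ.commutes a).symm)
  let d0 : κ[X] →ₗ[κ] M := (Ideal.Quotient.mkₐ κ _).toLinearMap ∘ₗ Polynomial.derivative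
  let d : (κ[X] ⧸ Ideal.span {(X : κ[X]) ^ (e + 2)}) →ₗ[κ] M :=
    ((Ideal.span {(X : κ[X]) ^ (e + 2)}).restrictScalars κ).liftQ d0 (by
      intro p hp
      rw [Submodule.restrictScalars_mem, Ideal.mem_span_singleton] at hp
      obtain ⟨q, rfl⟩ := hp
      rw [LinearMap.mem_ker]
      change Ideal.Quotient.mk _ (derivative (X ^ (e + 2) * q)) = 0
      rw [Ideal.Quotient.eq_zero_iff_mem, Ideal.mem_span_singleton, derivative_mul, 
        derivative_X_pow]
      refine ⟨C ((e + 2 : ℕ) : κ) * q + X * derivative q, ?_⟩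
      rw [show e + 2 - 1 = e + 1 by omega]
      ring)
  have hd : ∀ p, d (Ideal.Quotient.mk _ p) = Ideal.Quotient.mk _ (derivative p) := fun p => rfl
  let δ : Derivation K S M := Derivation.mk' ((d.restrictScalars K) ∘ₗ ψ.toLinearMap) (by
    intro a b
    obtain ⟨p, hp⟩ := Ideal.Quotient.mk_surjective (ψ a)
    obtain ⟨q, hq⟩ := Ideal.Quotient.mk_surjective (ψ b)
    change d (ψ (a * b)) = fac (ψ a) * d (ψ b) + fac (ψ b) * d (ψ a)
    rw [map_mul, ← hp, ← hq, ← map_mul, hd, hd, hd, hfac, hfac, derivative_mul, map_add, map_mul, 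
      map_mul]
    ring)
  have h1 := H M δ
  have hff : χ f = 0 := by
    change fac (ψ f) = 0
    rw [hf, hfac, Ideal.Quotient.eq_zero_iff_mem, Ideal.mem_span_singleton]
    exact Dvd.intro _ rfl
  have h0 : I • (⊤ : Submodule S M) = ⊥ := by
    rw [eq_bot_iff, Submodule.smul_le]
    intro x hx m _
    obtain ⟨y, hy⟩ := hI x hx
    have : χ x = 0 := by
      change fac (ψ x) = 0
      rw [hy, map_mul]
      change χ f * _ = 0
      rw [hff, zero_mul]
    change χ x * m = 0
    rw [this, zero_mul]
  rw [h0, Submodule.mem_bot] at h1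
  change d (ψ f) = 0 at h1
  rw [hf, hd, Ideal.Quotient.eq_zero_iff_mem, Ideal.mem_span_singleton, X_pow_dvd_iff] at h1
  have h2 := h1 e (by omega)
  rw [coeff_derivative, coeff_X_pow_mul', if_pos le_rfl, Nat.sub_self] at h2
  have : CharZero κ := charZero_of_injective_algebraMap (algebraMap K κ).injective
  rcases mul_eq_zero.1 h2 with h | h
  · exact hw h
  · exact Nat.cast_add_one_ne_zero e h

theorem exists_dvr_localization {C : Type u} [CommRing C] [IsDomain C] [IsNoetherianRing C]
    [IsIntegrallyClosed C] (b : C) (hb : b ≠ 0) (P : Ideal C) [P.IsPrime] (hbP : b ∈ P) :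
    ∃ (Q : Ideal C) (_ : Q.IsPrime), Q ≤ P ∧ b ∈ Q ∧ 
      IsDiscreteValuationRing (Localization.AtPrime Q) := by
  obtain ⟨Q, hQ, hQP⟩ := Ideal.exists_minimalPrimes_le (I := Ideal.span {b}) (J := P)
    ((Ideal.span_singleton_le_iff_mem P).2 hbP)
  have hQp : Q.IsPrime := hQ.1.1
  have hbQ : b ∈ Q := hQ.1.2 (Ideal.mem_span_singleton_self b)
  refine ⟨Q, hQp, hQP, hbQ, ?_⟩
  have hht := Ideal.height_le_one_of_isPrincipal_of_mem_minimalPrimes _ Q hQ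
  let V := Localization.AtPrime Q
  have hle : Q.primeCompl ≤ nonZeroDivisors C := Ideal.primeCompl_le_nonZeroDivisors Q
  have : IsDomain V := IsLocalization.isDomain_localization hle
  have : IsIntegrallyClosed V := isIntegrallyClosed_of_isLocalization V Q.primeCompl hle
  have : IsNoetherianRing V := IsLocalization.isNoetherianRing Q.primeCompl V inferInstance
  have hmap := Localization.AtPrime.map_eq_maximalIdeal (I := Q)
  have hinj : Function.Injective (algebraMap C V) := IsLocalization.injective V hle
  have hPID : IsPrincipalIdealRing V := by
    apply ((tfae_of_isNoetherianRing_of_isLocalRing_of_isDomain V).out 0 3).2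
    refine ⟨inferInstance, fun P' hP' hP'p => ?_⟩
    have h1 : (P'.comap (algebraMap C V)) ≤ Q := by
      exact (Ideal.comap_mono (IsLocalRing.le_maximalIdeal hP'p.ne_top)).trans
        (IsLocalization.AtPrime.under_maximalIdeal V Q).le
    rcases h1.lt_or_eq with h | h
    · exfalso
      have h2 := (Ideal.height_le_iff (n := 1)).1 (by exact_mod_cast hht) _ (hP'p.comap _) h
      have h3 : (P'.comap (algebraMap C V)).height = 0 := by
        simpa [Order.lt_one_iff] using h2
      rw [Ideal.height_eq_zero_iff_eq_bot] at h3
      apply hP'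
      rw [← IsLocalization.map_under Q.primeCompl V P']
      change Ideal.map _ (P'.comap (algebraMap C V)) = _
      rw [h3, Ideal.map_bot]
    · rw [← hmap, ← IsLocalization.map_under Q.primeCompl V P']
      exact congrArg _ h
  refine { hPID with not_a_field' := fun h => hb ?_ }
  have : algebraMap C V b ∈ IsLocalRing.maximalIdeal V := hmap ▸ Ideal.mem_map_of_mem _ hbQ
  rw [h, Ideal.mem_bot] at this
  exact hinj (by rw [this, map_zero])

/-- A finitely generated domain over a field of characteristic zero has a discrete valuation ring
centered inside a given prime containing a nonzero element `b`, with `b` a nonunit. -/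
theorem exists_dvr_fg {K B : Type u} [Field K] [CharZero K] [CommRing B] [IsDomain B] [Algebra K B]
    [Algebra.FiniteType K B] (b : B) (hb : b ≠ 0) (q : Ideal B) [q.IsPrime] (hbq : b ∈ q) :
    ∃ (V : Type u) (_ : CommRing V) (_ : IsDomain V) (_ : IsDiscreteValuationRing V) 
      (_ : Algebra K V) (φ : B →ₐ[K] V), Function.Injective φ ∧ ¬ IsUnit (φ b) ∧ 
        ∀ x ∉ q, IsUnit (φ x) := by
  obtain ⟨s, g, hg, hfin⟩ := exists_finite_inj_algHom_of_fg K B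
  let R := MvPolynomial (Fin s) K
  let L := FractionRing B
  let : Algebra R B := g.toRingHom.toAlgebra
  have : IsScalarTower K R B := IsScalarTower.of_algebraMap_eq (fun a => (g.commutes a).symm)
  have hRB : Module.Finite R B := hfin
  have hinjRB : Function.Injective (algebraMap R B) := hg
  have : FaithfulSMul R B := (faithfulSMul_iff_algebraMap_injective R B).2 hinjRB
  let F := FractionRing R
  have hinj : Function.Injective (algebraMap R L) := by
    rw [IsScalarTower.algebraMap_eq R B L]
    exact (IsFractionRing.injective B L).comp hinjRB
  have : FaithfulSMul R L := (faithfulSMul_iff_algebraMap_injective R L).2 hinj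
  let : Algebra F L := FractionRing.liftAlgebra R L
  have : IsScalarTower R F L := FractionRing.isScalarTower_liftAlgebra R L
  have : CharZero F := 
    charZero_of_injective_algebraMap (IsFractionRing.injective R F)
  have : FiniteDimensional F L := .of_isLocalization R B (nonZeroDivisors R)
  let C := integralClosure R L
  have : IsNoetherianRing C := IsIntegralClosure.isNoetherianRing R F L C
  have : IsIntegrallyClosed C := integralClosure.isIntegrallyClosedOfFiniteExtension F
  let ι : B →ₐ[R] C := (IsScalarTower.toAlgHom R B L).codRestrict C 
    (fun x => (Algebra.IsIntegral.isIntegral (R := R) x).map (IsScalarTower.toAlgHom R B L))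
  have hι : Function.Injective ι := fun x y h => 
    IsFractionRing.injective B L (congrArg Subtype.val h)
  let : Algebra B C := ι.toRingHom.toAlgebra
  have : IsScalarTower R B C := IsScalarTower.of_algebraMap_eq (fun a => (ι.commutes a).symm)
  have : Algebra.IsIntegral R C := inferInstance
  have : Algebra.IsIntegral B C := Algebra.IsIntegral.tower_top (R := R)
  obtain ⟨P, -, hP, hPq⟩ := Ideal.exists_ideal_over_prime_of_isIntegral q (⊥ : Ideal C) (by
    rw [Ideal.comap_bot_of_injective (algebraMap B C) hι]; exact bot_le)
  obtain ⟨Q, hQ, hQP, hbQ, hdvr⟩ := exists_dvr_localization (ι b) 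
    (by rwa [Ne, map_eq_zero_iff _ hι]) P (by
      have : b ∈ P.comap (algebraMap B C) := by rw [hPq]; exact hbq
      exact this)
  let V := Localization.AtPrime Q
  let φ : B →ₐ[K] V := (IsScalarTower.toAlgHom K C V).comp (ι.restrictScalars K)
  refine ⟨V, inferInstance, inferInstance, hdvr, inferInstance, φ, ?_, ?_, ?_⟩
  · exact (IsLocalization.injective V (Ideal.primeCompl_le_nonZeroDivisors Q)).comp hι
  · intro h
    exact (IsLocalization.AtPrime.isUnit_to_map_iff V Q (ι b)).1 h hbQ
  · intro x hx
    refine (IsLocalization.AtPrime.isUnit_to_map_iff V Q (ι x)).2 (fun h => hx ?_)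
    rw [← hPq]
    exact hQP h

theorem exists_dvr {K B : Type u} [Field K] [CharZero K] [CommRing B] [IsDomain B] [Algebra K B]
    [Algebra.EssFiniteType K B] (b : B) (hb : b ≠ 0) (hbu : ¬ IsUnit b) :
    ∃ (V : Type u) (_ : CommRing V) (_ : IsDomain V) (_ : IsDiscreteValuationRing V) 
      (_ : Algebra K V) (φ : B →ₐ[K] V), φ b ≠ 0 ∧ ¬ IsUnit (φ b) := by
  let B0 := Algebra.EssFiniteType.subalgebra K B
  let M := Algebra.EssFiniteType.submonoid K B
  have : IsLocalization M B := inferInstance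
  obtain ⟨Q, hQ, hbQ⟩ := exists_max_ideal_of_mem_nonunits hbu
  have := hQ.isPrime
  obtain ⟨⟨b0, m⟩, hm⟩ := IsLocalization.surj M b
  have hmu := IsLocalization.map_units B m
  simp only at hm
  have hb0 : b0 ≠ 0 := by
    rintro rfl
    rw [map_zero] at hm
    exact hb ((hmu.mul_left_eq_zero).1 hm)
  obtain ⟨V, _, _, _, _, φ, hφ, hφb, hφq⟩ := exists_dvr_fg (K := K) b0 hb0 (Q.comap (algebraMap B0 B)) (by
    rw [Ideal.mem_comap, ← hm]; exact Ideal.mul_mem_right _ _ hbQ)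
  have hM : ∀ y : M, IsUnit (φ y) := by
    intro y
    refine hφq _ (fun h => ?_)
    exact hQ.ne_top (Ideal.eq_top_of_isUnit_mem _ h (IsLocalization.map_units B y))
  let Φ : B →ₐ[K] V := IsLocalization.liftAlgHom (M := M) (f := φ) hM
  have hΦ : ∀ x, Φ (algebraMap B0 B x) = φ x := fun x => by
    exact IsLocalization.lift_eq (M := M) (g := φ.toRingHom) hM x
  have h1 : Φ b * φ m = φ b0 := by rw [← hΦ, ← hΦ, ← map_mul, hm]
  refine ⟨V, inferInstance, inferInstance, inferInstance, inferInstance, Φ, fun h => ?_, 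
    fun h => hφb ?_⟩
  · rw [h, zero_mul, eq_comm, map_eq_zero_iff _ hφ] at h1
    exact hb0 h1
  · rw [← h1]; exact h.mul (hM m)

theorem one_imp_three {K S : Type u} [Field K] [CharZero K]
    [CommRing S] [Algebra K S] [Algebra.EssFiniteType K S] [Algebra.FormallySmooth K S]
    (I : Ideal S) (f : S) (hf : f ∈ I) 
    (h : ∀ D : Derivation K S S, D f ∈ I) : ∃ n : ℕ, 0 < n ∧ f ^ n ∈ I ^ (n + 1) := by
  have hN : IsNoetherianRing S := Algebra.EssFiniteType.isNoetherianRing K S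
  by_contra hcon
  push Not at hcon
  let Sf := Localization.Away f
  let t : Sf := IsLocalization.Away.invSelf f
  have ht : algebraMap S Sf f * t = 1 := IsLocalization.Away.mul_invSelf f
  obtain ⟨G, hG⟩ : I.FG := IsNoetherian.noetherian I
  let A : Subalgebra S Sf := Algebra.adjoin S (Set.image (fun a => algebraMap S Sf a * t) (G : Set S))
  have hAft : Algebra.FiniteType S A := by
    rw [← Subalgebra.fg_iff_finiteType]
    exact Subalgebra.fg_def.2 ⟨_, G.finite_toSet.image _, rfl⟩
  have hAI : ∀ a ∈ I, algebraMap S Sf a * t ∈ A := by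
    intro a ha
    rw [← hG] at ha
    induction ha using Submodule.span_induction with
    | mem x hx => exact Algebra.subset_adjoin ⟨x, hx, rfl⟩
    | zero => simp
    | add x y _ _ hx hy => rw [map_add, add_mul]; exact add_mem hx hy
    | smul r x _ hx => 
      rw [smul_eq_mul, map_mul, mul_assoc]
      exact mul_mem (A.algebraMap_mem r) hx
  have hA : ∀ y ∈ A, ∃ n : ℕ, ∃ a ∈ I ^ n, y = algebraMap S Sf a * t ^ n := by
    intro y hy
    induction hy using Algebra.adjoin_induction with
    | mem x hx =>
      obtain ⟨a, ha, rfl⟩ := hx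
      exact ⟨1, a, by rw [pow_one, ← hG]; exact Submodule.subset_span ha, by simp⟩
    | algebraMap r => exact ⟨0, r, by simp, by simp⟩
    | add x y _ _ hx hy =>
      obtain ⟨n, a, ha, rfl⟩ := hx
      obtain ⟨m, b, hb, rfl⟩ := hy
      refine ⟨n + m, a * f ^ m + f ^ n * b, ?_, ?_⟩
      · rw [pow_add]
        exact add_mem (Ideal.mul_mem_mul ha (Ideal.pow_mem_pow hf _)) 
          (Ideal.mul_mem_mul (Ideal.pow_mem_pow hf _) hb)
      · have h1 : ∀ k, algebraMap S Sf f ^ k * t ^ k = 1 := fun k => by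
          rw [← mul_pow, ht, one_pow]
        rw [map_add, map_mul, map_mul, map_pow, map_pow]
        linear_combination (-(algebraMap S Sf a * t ^ n)) * h1 m 
          - (algebraMap S Sf b * t ^ m) * h1 n
    | mul x y _ _ hx hy =>
      obtain ⟨n, a, ha, rfl⟩ := hx
      obtain ⟨m, b, hb, rfl⟩ := hy
      refine ⟨n + m, a * b, ?_, ?_⟩
      · rw [pow_add]; exact Ideal.mul_mem_mul ha hb
      · rw [map_mul]; ring
  let fA : A := algebraMap S A f
  have hfA : ¬ IsUnit fA := by
    intro hu
    obtain ⟨y, hy⟩ := hu.exists_right_inv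
    have hy' : algebraMap S Sf f * (y : Sf) = 1 := congrArg Subtype.val hy
    obtain ⟨n, a, ha, hya⟩ := hA y y.2
    have h1 : algebraMap S Sf (f ^ n) = algebraMap S Sf (f * a) := by
      rw [map_mul, map_pow]
      have h2 : algebraMap S Sf f ^ n * t ^ n = 1 := by rw [← mul_pow, ht, one_pow]
      rw [hya] at hy'
      linear_combination (-(algebraMap S Sf f ^ n)) * hy' + algebraMap S Sf f * algebraMap S Sf a * h2
    obtain ⟨⟨_, k, rfl⟩, hk⟩ := (IsLocalization.eq_iff_exists (Submonoid.powers f) Sf).1 h1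
    simp only at hk
    apply hcon (k + n + 1) (by omega)
    have h3 : f ^ (k + n + 1) = f ^ (k + 2) * a := by
      linear_combination f * hk
    rw [h3, show k + n + 1 + 1 = (k + 2) + n by omega, pow_add]
    exact Ideal.mul_mem_mul (Ideal.pow_mem_pow hf _) ha
  have hfnzd : fA ∈ nonZeroDivisors A := by
    rw [mem_nonZeroDivisors_iff_right]
    intro x hx
    have hx' : (x : Sf) * algebraMap S Sf f = 0 := congrArg Subtype.val hx
    apply Subtype.ext
    change (x : Sf) = 0
    linear_combination t * hx' - (x : Sf) * ht
  obtain ⟨Q, hQ, hfQ⟩ := exists_max_ideal_of_mem_nonunits hfA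
  have := hQ.isPrime
  obtain ⟨p, hp, hpQ⟩ := Ideal.exists_minimalPrimes_le (I := (⊥ : Ideal A)) (J := Q) bot_le
  have hpp : p.IsPrime := hp.1.1
  have hfp : fA ∉ p := fun hh => 
    Set.disjoint_left.1 (Ideal.disjoint_nonZeroDivisors_of_mem_minimalPrimes hp) hh hfnzd
  have hAess : Algebra.EssFiniteType K A := Algebra.EssFiniteType.comp K S A
  let B := A ⧸ p
  have hBess : Algebra.EssFiniteType K B := inferInstance
  obtain ⟨V, _, _, _, _, φ, hφ0, hφu⟩ := exists_dvr (K := K) (Ideal.Quotient.mk p fA) 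
    (by rwa [Ne, Ideal.Quotient.eq_zero_iff_mem]) (fun hu => by
      have h1 := hu.map (Ideal.Quotient.factor hpQ)
      rw [Ideal.Quotient.factor_mk, Ideal.Quotient.eq_zero_iff_mem.2 hfQ] at h1
      exact not_isUnit_zero h1)
  obtain ⟨κ, _, _, e, w, ψ, hw, hψ⟩ := exists_arc (K := K) _ hφ0 hφu
  let α : S →ₐ[K] V := φ.comp ((Ideal.Quotient.mkₐ K p).comp (IsScalarTower.toAlgHom K S A))
  refine not_arc e w hw (ψ.comp α) f I hψ ?_ (fun M _ _ _ _ δ => derivation_mem_smul I f h δ)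
  intro x hx
  let y : A := ⟨algebraMap S Sf x * t, hAI x hx⟩
  have hxy : algebraMap S A x = fA * y := by
    apply Subtype.ext
    change algebraMap S Sf x = algebraMap S Sf f * (algebraMap S Sf x * t)
    linear_combination (-algebraMap S Sf x) * ht
  refine ⟨ψ (φ (Ideal.Quotient.mk p y)), ?_⟩
  change ψ (φ (Ideal.Quotient.mk p (algebraMap S A x))) = 
    ψ (φ (Ideal.Quotient.mk p fA)) * _
  rw [hxy, map_mul, map_mul, map_mul]

end HublAux

/-- **Hübl**: let `K` be a field of characteristic zero and `S` a smooth `K`-algebra,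
essentially of finite type over `K`. For a radical ideal `I ⊆ S` and `f ∈ I`,
the following are equivalent: (1) `∂(f) ∈ I` for every `K`-linear derivation `∂ : S → S`;
(2) `f ∈ I^{(2)}`; (3) `f^n ∈ I^{n+1}` for some positive integer `n`. -/
theorem derivation_mem_iff_mem_symbolicPower_two {K S : Type u} [Field K] [CharZero K]
    [CommRing S] [Algebra K S] [Algebra.EssFiniteType K S] [Algebra.FormallySmooth K S]
    (I : Ideal S) (hI : I.IsRadical) (f : S) (hf : f ∈ I) :
    ((∀ D : Derivation K S S, D f ∈ I) ↔ f ∈ symbolicPower I 2) ∧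
      (f ∈ symbolicPower I 2 ↔ ∃ n : ℕ, 0 < n ∧ f ^ n ∈ I ^ (n + 1)) := by
  have h12 : (∀ D : Derivation K S S, D f ∈ I) ↔ f ∈ symbolicPower I 2 :=
    ⟨HublAux.one_imp_two I hI f hf, fun h D => HublAux.two_imp_one I hI f hf h D⟩
  refine ⟨h12, h12.symm.trans ⟨HublAux.one_imp_three I f hf, ?_⟩⟩
  rintro ⟨n, -, hn⟩ D
  exact HublAux.three_imp_one I hI f hf n hn D
end

section
/- Let K be a field of characteristic zero, and let S be a smooth K-algebra, essentially of finite type over K. Given a radical ideal I ⊆ S, there exists a positive integer N such that (I^{(2)})^n ⊆ I^{n+1} for all n ≥ N. -/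
universe u

open KaehlerDifferential

/-- The `k`-dual of `C`, with its `C`-module structure. -/
def DualMod (k C : Type*) [Field k] [CommRing C] [Algebra k C] := C →ₗ[k] k

namespace DualMod
variable {k C : Type*} [Field k] [CommRing C] [Algebra k C]

noncomputable instance : AddCommGroup (DualMod k C) := inferInstanceAs (AddCommGroup (C →ₗ[k] k))

noncomputable instance : Module k (DualMod k C) := inferInstanceAs (Module k (C →ₗ[k] k))

def ev (φ : DualMod k C) (c : C) : k := (show C →ₗ[k] k from φ) c

theorem ext {φ ψ : DualMod k C} (h : ∀ c, φ.ev c = ψ.ev c) : φ = ψ := LinearMap.ext h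

theorem ev_add (φ ψ : DualMod k C) (c : C) : (φ + ψ).ev c = φ.ev c + ψ.ev c := rfl

noncomputable instance : Module C (DualMod k C) where
  smul c φ := (show C →ₗ[k] k from φ) ∘ₗ LinearMap.mulLeft k c
  one_smul φ := by
    apply LinearMap.ext; intro x
    exact congrArg (show C →ₗ[k] k from φ) (one_mul x)
  mul_smul a b φ := by
    apply LinearMap.ext; intro x
    exact congrArg (show C →ₗ[k] k from φ) (show (a * b) * x = b * (a * x) by ring)
  smul_zero a := rfl
  smul_add a φ ψ := rfl
  add_smul a b φ := by
    apply LinearMap.ext; intro x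
    exact (congrArg (show C →ₗ[k] k from φ) (add_mul a b x)).trans (map_add _ _ _)
  zero_smul φ := by
    apply LinearMap.ext; intro x
    exact (congrArg (show C →ₗ[k] k from φ) (zero_mul x)).trans (map_zero _)

theorem ev_smul (a : C) (φ : DualMod k C) (c : C) : (a • φ).ev c = φ.ev (a * c) := rfl

instance : IsScalarTower k C (DualMod k C) where
  smul_assoc r c φ := by
    apply LinearMap.ext; intro x
    exact (congrArg (show C →ₗ[k] k from φ) (smul_mul_assoc r c x)).trans (map_smul _ _ _)

end DualMod

theorem not_D_mem_aux {k C Q : Type*} [Field k] [CharZero k] [CommRing C] [Algebra k C] (u : C)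
    (hu2 : u * u = 0) (hann : ∀ x, u * x = 0 → ∃ d, x = u * d)
    [AddCommGroup Q] [Module k Q] [Module C Q] [IsScalarTower k C Q]
    [Module.Finite k Q] [Nontrivial Q] (π₀ : C →ₗ[C] Q) (hπs₀ : Function.Surjective π₀)
    (hπ0₀ : ∀ c, π₀ c = 0 ↔ ∃ d, c = u * d)
    (ω : Ω[C⁄k]) (h : D k C u = u • ω) : False := by
  let π : C →ₗ[k] Q := π₀.restrictScalars k
  have hπs : Function.Surjective π := hπs₀
  have hπ0 : ∀ c, π c = 0 ↔ ∃ d, c = u * d := hπ0₀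
  have hπm : ∀ c d, π (c * d) = c • π d := fun c d => π₀.map_smul c d
  obtain ⟨σ, hσ⟩ := π.exists_rightInverse_of_surjective (LinearMap.range_eq_top.mpr hπs)
  have hσ' : ∀ x, π (σ x) = x := fun x => LinearMap.congr_fun hσ x
  let m : Q →ₗ[k] C := LinearMap.mulLeft k u ∘ₗ σ
  have hm : ∀ c, m (π c) = u * c := fun c => by
    have : π (σ (π c) - c) = 0 := by rw [map_sub, hσ', sub_self]
    obtain ⟨d, hd⟩ := (hπ0 _).1 this
    have : u * (σ (π c) - c) = 0 := by rw [hd, ← mul_assoc, hu2, zero_mul]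
    simp only [m, LinearMap.comp_apply, LinearMap.mulLeft_apply]
    linear_combination this
  have hminj : Function.Injective m := by
    rw [injective_iff_map_eq_zero]
    intro x hx
    obtain ⟨c, rfl⟩ := hπs x
    rw [hm] at hx
    exact (hπ0 c).2 (hann c hx)
  obtain ⟨ρ, hρ⟩ := m.exists_leftInverse_of_injective (LinearMap.ker_eq_bot.2 hminj)
  have hρ' : ∀ c, ρ (u * c) = π c := fun c => by
    rw [← hm]; exact LinearMap.congr_fun hρ _
  have hρm : ∀ b y, π y = 0 → ρ (b * y) = b • ρ y := fun b y hy => by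
    obtain ⟨d, rfl⟩ := (hπ0 _).1 hy
    rw [show b * (u * d) = u * (b * d) by ring, hρ', hρ', hπm]
  let L : C →ₐ[k] Module.End k Q := Algebra.lsmul k k Q
  have hL : ∀ c x, L c x = c • x := fun _ _ => rfl
  let β : C →ₗ[k] Module.End k Q :=
    { toFun := fun b => ρ ∘ₗ (LinearMap.mulLeft k b ∘ₗ σ - σ ∘ₗ L b)
      map_add' := fun b c => by
        ext x
        simp only [LinearMap.comp_apply, LinearMap.sub_apply, LinearMap.mulLeft_apply,
          LinearMap.add_apply, map_add, map_sub, add_mul]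
        abel
      map_smul' := fun r b => by
        ext x
        simp [LinearMap.comp_apply, LinearMap.sub_apply, LinearMap.mulLeft_apply, smul_sub] }
  have hβ : ∀ b x, β b x = ρ (b * σ x - σ (b • x)) := fun _ _ => rfl
  have hβm : ∀ b c, β (b * c) = L b * β c + β b * L c := fun b c => by
    ext x
    rw [LinearMap.add_apply, Module.End.mul_apply, Module.End.mul_apply, hβ, hβ, hβ, hL, hL,
      ← hρm, ← map_add]
    · congr 1
      rw [mul_smul]; ring
    · rw [map_sub, hσ', hπm, hσ', sub_self]
  have hβu : β u = 1 := by
    ext x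
    have : u • x = 0 := by
      obtain ⟨c, rfl⟩ := hπs x
      rw [← hπm, hπ0]; exact ⟨c, rfl⟩
    rw [hβ, this, map_zero, sub_zero, hρ', hσ']; rfl
  have hLu : L u = 0 := by
    ext x
    obtain ⟨c, rfl⟩ := hπs x
    rw [hL, ← hπm, LinearMap.zero_apply, hπ0]; exact ⟨c, rfl⟩
  let T : Module.End k Q →ₗ[k] k := LinearMap.trace k Q
  let E0 : C →ₗ[k] DualMod k C :=
    { toFun := fun b => (T ∘ₗ LinearMap.mulRight k (β b) ∘ₗ L.toLinearMap : C →ₗ[k] k)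
      map_add' := fun b c => by
        apply LinearMap.ext; intro a
        change T (L a * β (b + c)) = T (L a * β b) + T (L a * β c)
        rw [map_add, mul_add, map_add]
      map_smul' := fun r b => by
        apply LinearMap.ext; intro a
        change T (L a * β (r • b)) = r • T (L a * β b)
        rw [map_smul, mul_smul_comm, map_smul] }
  have hE0 : ∀ b a, (E0 b).ev a = T (L a * β b) := fun _ _ => rfl
  let E : Derivation k C (DualMod k C) := Derivation.mk' E0 (fun b c => by
    apply DualMod.ext; intro a
    rw [DualMod.ev_add, DualMod.ev_smul, DualMod.ev_smul, hE0, hE0, hE0, hβm, mul_add, map_add]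
    congr 1
    · rw [mul_comm b a, map_mul L, mul_assoc]
    · rw [← mul_assoc]
      change LinearMap.trace k Q _ = LinearMap.trace k Q _
      rw [LinearMap.trace_mul_comm, ← mul_assoc, ← map_mul L])
  have h1 : E u = u • E.liftKaehlerDifferential ω := by
    rw [← Derivation.liftKaehlerDifferential_comp_D E u, h, map_smul]
  have h3 : ∀ ω : Ω[C⁄k], u • E.liftKaehlerDifferential ω = 0 := by
    intro ω
    have : ω ∈ Submodule.span C (Set.range (D k C)) := by
      rw [KaehlerDifferential.span_range_derivation]; trivial
    induction this using Submodule.span_induction with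
    | mem x hx =>
      obtain ⟨b, rfl⟩ := hx
      rw [Derivation.liftKaehlerDifferential_comp_D]
      apply DualMod.ext; intro a
      rw [DualMod.ev_smul]
      change T (L (u * a) * β b) = 0
      rw [map_mul L, hLu, zero_mul, zero_mul, map_zero]
    | zero => rw [map_zero, smul_zero]
    | add x y _ _ hx hy => rw [map_add, smul_add, hx, hy, add_zero]
    | smul a x _ hx => rw [map_smul, smul_comm, hx, smul_zero]
  have h2 : (E u).ev 1 = 0 := by rw [h1, h3]; rfl
  have h4 : (E u).ev 1 = T (L 1 * β u) := rfl
  rw [h4, hβu, map_one, one_mul] at h2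
  change LinearMap.trace k Q 1 = 0 at h2
  rw [LinearMap.trace_one, Nat.cast_eq_zero] at h2
  exact (Module.finrank_pos (R := k) (M := Q)).ne' h2

theorem formallySmooth_charZero {K L : Type*} [Field K] [Field L] [CharZero K] [Algebra K L] :
    Algebra.FormallySmooth K L := by
  obtain ⟨s, hs⟩ := exists_isTranscendenceBasis K L
  have : Algebra.IsAlgebraic (IntermediateField.adjoin K (Set.range ((↑) : s → L))) L :=
    hs.isAlgebraic_field
  exact .of_algebraicIndependent_of_isSeparable hs.1

theorem not_D_mem {k C : Type*} [Field k] [CharZero k] [CommRing C] [Algebra k C] (u : C)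
    (hu2 : u * u = 0) (hann : ∀ x, u * x = 0 → ∃ d, x = u * d)
    [Module.Finite k C] (hu : ¬ IsUnit u)
    (ω : Ω[C⁄k]) (h : D k C u = u • ω) : False := by
  have : Nontrivial (C ⧸ Ideal.span {u}) := by
    rw [Ideal.Quotient.nontrivial_iff]
    rwa [Ne, Ideal.span_singleton_eq_top]
  have : Module.Finite k (C ⧸ Ideal.span {u}) :=
    .of_surjective (Ideal.Quotient.mkₐ k (Ideal.span {u})).toLinearMap
      Ideal.Quotient.mk_surjective
  refine not_D_mem_aux (Q := C ⧸ Ideal.span {u}) u hu2 hann (Submodule.mkQ (Ideal.span {u}))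
    (Submodule.mkQ_surjective _) (fun c => ?_) ω h
  rw [Submodule.mkQ_apply, Submodule.Quotient.mk_eq_zero, Ideal.mem_span_singleton]
  rfl

theorem not_D_mem_local {K A : Type*} [Field K] [CharZero K] [CommRing A] [Algebra K A]
    [IsLocalRing A] [IsNoetherianRing A] (u : A) (hu : u ∈ nonZeroDivisors A)
    (hum : u ∈ IsLocalRing.maximalIdeal A)
    (hrad : IsLocalRing.maximalIdeal A ≤ (Ideal.span {u}).radical)
    (ω : Ω[A⁄K]) (h : D K A u = u • ω) : False := by
  have hcan : ∀ x y : A, u * x = u * y → x = y := fun x y hxy =>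
    (mul_cancel_left_mem_nonZeroDivisors hu).1 hxy
  let J : Ideal A := Ideal.span {u ^ 2}
  let κ := IsLocalRing.ResidueField A
  have hJ : ∀ a ∈ J, IsScalarTower.toAlgHom K A κ a = 0 := by
    intro a ha
    refine (IsLocalRing.residue_eq_zero_iff a).2 ?_
    exact (Ideal.span_singleton_le_iff_mem _).2 (Ideal.pow_mem_of_mem _ hum 2 two_pos) ha
  let g : (A ⧸ J) →ₐ[K] κ := Ideal.Quotient.liftₐ J (IsScalarTower.toAlgHom K A κ) hJ
  have hg : ∀ a : A, g (Ideal.Quotient.mk J a) = IsLocalRing.residue A a := fun a => rfl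
  have hgs : Function.Surjective g := by
    intro x
    obtain ⟨a, rfl⟩ := IsLocalRing.residue_surjective x
    exact ⟨_, hg a⟩
  have hker : RingHom.ker (g : (A ⧸ J) →+* κ) ≤ nilradical (A ⧸ J) := by
    intro x hx
    obtain ⟨a, rfl⟩ := Ideal.Quotient.mk_surjective x
    have ha : a ∈ IsLocalRing.maximalIdeal A := (IsLocalRing.residue_eq_zero_iff a).1 hx
    obtain ⟨n, hn⟩ := hrad ha
    refine ⟨n * 2, ?_⟩
    change (Ideal.Quotient.mk J a) ^ (n * 2) = 0
    rw [← map_pow, Ideal.Quotient.eq_zero_iff_mem, pow_mul]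
    obtain ⟨d, hd⟩ := Ideal.mem_span_singleton.1 hn
    rw [hd]
    exact Ideal.mem_span_singleton.2 ⟨d ^ 2, by ring⟩
  have hnil : IsNilpotent (RingHom.ker (g : (A ⧸ J) →+* κ)) :=
    (Ideal.FG.isNilpotent_iff_le_nilradical (IsNoetherian.noetherian _)).2 hker
  have : Algebra.FormallySmooth K κ := formallySmooth_charZero
  let s : κ →ₐ[K] (A ⧸ J) := Algebra.FormallySmooth.liftOfSurjective (AlgHom.id K κ) g hgs hnil
  have hs : ∀ x, g (s x) = x := fun x =>
    Algebra.FormallySmooth.liftOfSurjective_apply (AlgHom.id K κ) g hgs hnil x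
  let : Algebra κ (A ⧸ J) := s.toRingHom.toAlgebra
  have hsm : ∀ (x : κ) (y : A ⧸ J), x • y = s x * y := fun _ _ => rfl
  have : IsScalarTower K κ (A ⧸ J) := IsScalarTower.of_algebraMap_eq fun x => (s.commutes x).symm
  have : SMulCommClass κ A (A ⧸ J) := ⟨fun x a y => by
    rw [hsm, hsm, mul_smul_comm]⟩
  let g' : (A ⧸ J) →ₐ[κ] κ := { (g : (A ⧸ J) →+* κ) with commutes' := hs }
  have : Module.Finite κ (A ⧸ J) :=
    Module.finite_of_surjective_of_ker_le_nilradical g' hgs hker (IsNoetherian.noetherian _)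
  have : CharZero κ := charZero_of_injective_algebraMap (algebraMap K κ).injective
  refine not_D_mem (k := κ) (Ideal.Quotient.mk J u) ?_ ?_ ?_
    (KaehlerDifferential.map K κ A (A ⧸ J) ω) ?_
  · rw [← map_mul, Ideal.Quotient.eq_zero_iff_mem, ← pow_two]
    exact Ideal.mem_span_singleton_self _
  · intro x hx
    obtain ⟨a, rfl⟩ := Ideal.Quotient.mk_surjective x
    rw [← map_mul, Ideal.Quotient.eq_zero_iff_mem] at hx
    obtain ⟨d, hd⟩ := Ideal.mem_span_singleton.1 hx
    refine ⟨Ideal.Quotient.mk J d, ?_⟩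
    rw [← map_mul]
    congr 1
    apply hcan
    rw [hd]; ring
  · intro hun
    have h1 := hun.map g
    rw [hg, (IsLocalRing.residue_eq_zero_iff u).2 hum] at h1
    exact not_isUnit_zero h1
  · have := congrArg (KaehlerDifferential.map K κ A (A ⧸ J)) h
    rw [KaehlerDifferential.map_D, map_smul] at this
    rw [← algebraMap_smul (A ⧸ J) u] at this
    exact this

theorem mem_radical_of_D {K R : Type*} [Field K] [CharZero K] [CommRing R] [Algebra K R]
    [IsNoetherianRing R] (u F : R) (hu : u ∈ nonZeroDivisors R)
    (ω : Ω[R⁄K]) (h : F • D K R u = u • ω) : F ∈ (Ideal.span {u}).radical := by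
  rw [← Ideal.sInf_minimalPrimes, Ideal.mem_sInf]
  intro P hP
  by_contra hF
  have hPp : P.IsPrime := hP.1.1
  have huP : u ∈ P := hP.1.2 (Ideal.mem_span_singleton_self u)
  let A := Localization.AtPrime P
  have hFu : IsUnit (algebraMap R A F) := IsLocalization.map_units A (⟨F, hF⟩ : P.primeCompl)
  obtain ⟨v, hv⟩ := hFu.exists_left_inv
  have hnoeth : IsNoetherianRing A := IsLocalization.isNoetherianRing P.primeCompl A inferInstance
  refine not_D_mem_local (K := K) (A := A) (algebraMap R A u) ?_ ?_ ?_
    (v • KaehlerDifferential.map K K R A ω) ?_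
  · exact IsLocalization.map_nonZeroDivisors_le P.primeCompl A ⟨u, hu, rfl⟩
  · exact (IsLocalization.AtPrime.to_map_mem_maximal_iff A P u).2 huP
  · rw [← Ideal.sInf_minimalPrimes]
    refine le_sInf fun q hq => ?_
    have hqp : q.IsPrime := hq.1.1
    have h1 : q.comap (algebraMap R A) ≤ P := by
      intro x hx
      exact (IsLocalization.AtPrime.to_map_mem_maximal_iff A P x).1
        (IsLocalRing.le_maximalIdeal hqp.ne_top hx)
    have h2 : P ≤ q.comap (algebraMap R A) := by
      refine hP.2 ⟨Ideal.comap_isPrime _ _, ?_⟩ h1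
      rw [Ideal.span_singleton_le_iff_mem, Ideal.mem_comap]
      exact hq.1.2 (Ideal.mem_span_singleton_self _)
    rw [← IsLocalization.AtPrime.map_eq_maximalIdeal P A]
    exact Ideal.map_le_iff_le_comap.2 h2
  · have := congrArg (KaehlerDifferential.map K K R A) h
    rw [map_smul, map_smul, KaehlerDifferential.map_D, ← algebraMap_smul A F,
      ← algebraMap_smul A u] at this
    rw [smul_comm, ← this, smul_smul, hv, one_smul]

theorem D_mem_of_mem_sq {K S : Type*} [Field K] [CommRing S] [Algebra K S] (I : Ideal S)
    {g : S} (hg : g ∈ I ^ 2) : D K S g ∈ I • (⊤ : Submodule S Ω[S⁄K]) := by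
  rw [pow_two] at hg
  refine Submodule.mul_induction_on hg ?_ ?_
  · intro a ha b hb
    rw [Derivation.leibniz]
    exact add_mem (Submodule.smul_mem_smul ha trivial) (Submodule.smul_mem_smul hb trivial)
  · intro x y hx hy
    rw [map_add]; exact add_mem hx hy

theorem mem_of_mem_symbolicPower_two {S : Type*} [CommRing S]
    (I : Ideal S) {f : S} (hf : f ∈ symbolicPower I 2) (P : Ideal S)
    (hP : P ∈ I.minimalPrimes) : ∃ s, s ∉ P ∧ s * f ∈ I ^ 2 := by
  unfold symbolicPower at hf
  have h1 := (Submodule.mem_iInf _).1 ((Submodule.mem_iInf _).1 hf P) hP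
  have : P.IsPrime := hP.1.1
  rw [Ideal.mem_comap, IsLocalization.algebraMap_mem_map_algebraMap_iff P.primeCompl] at h1
  obtain ⟨m, hm, h⟩ := h1
  exact ⟨m, hm, h⟩

theorem symbolicPower_two_spec {K S : Type*} [Field K] [CommRing S] [Algebra K S]
    [Module.Projective S Ω[S⁄K]] (I : Ideal S) (hI : I.IsRadical) {f : S}
    (hf : f ∈ symbolicPower I 2) : f ∈ I ∧ D K S f ∈ I • (⊤ : Submodule S Ω[S⁄K]) := by
  have key : ∀ x : S, (∀ P ∈ I.minimalPrimes, x ∈ P) → x ∈ I := by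
    intro x hx
    rw [← hI.radical, ← Ideal.sInf_minimalPrimes, Ideal.mem_sInf]
    exact fun {P} hP => hx P hP
  have hfI : f ∈ I := by
    apply key
    intro P hP
    obtain ⟨s, hs, h⟩ := mem_of_mem_symbolicPower_two I hf P hP
    exact (hP.1.1.mem_or_mem (hP.1.2 (Ideal.pow_le_self two_ne_zero h))).resolve_left hs
  refine ⟨hfI, ?_⟩
  have hφ : ∀ φ : Ω[S⁄K] →ₗ[S] S, φ (D K S f) ∈ I := by
    intro φ
    have hφI : ∀ w ∈ I • (⊤ : Submodule S Ω[S⁄K]), φ w ∈ I := by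
      intro w hw
      induction hw using Submodule.smul_induction_on' with
      | smul r hr n hn => rw [map_smul]; exact I.mul_mem_right _ hr
      | add x _ y _ hx hy => rw [map_add]; exact add_mem hx hy
    apply key
    intro P hP
    obtain ⟨s, hs, h⟩ := mem_of_mem_symbolicPower_two I hf P hP
    have h1 := hφI _ (D_mem_of_mem_sq (K := K) I h)
    rw [Derivation.leibniz, map_add, map_smul, map_smul, smul_eq_mul, smul_eq_mul] at h1
    have h2 := (I.add_mem_iff_left (I.mul_mem_right _ hfI)).1 h1
    exact (hP.1.1.mem_or_mem (hP.1.2 h2)).resolve_left hs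
  obtain ⟨σ, hσ⟩ := Module.projective_def'.1 (inferInstance : Module.Projective S Ω[S⁄K])
  have h1 : D K S f = Finsupp.linearCombination S id (σ (D K S f)) :=
    (LinearMap.congr_fun hσ _).symm
  rw [h1, Finsupp.linearCombination_apply]
  refine Submodule.sum_mem _ fun i _ => Submodule.smul_mem_smul ?_ trivial
  exact hφ (Finsupp.lapply i ∘ₗ σ)

open LaurentPolynomial in
theorem exists_rees {S : Type*} [CommRing S] [IsNoetherianRing S] (I : Ideal S) :
    ∃ R : Subalgebra S S[T;T⁻¹], IsNoetherianRing R ∧ T (-1) ∈ R ∧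
      (∀ a ∈ I, C a * T 1 ∈ R) ∧ ∀ x ∈ R, ∀ n : ℕ, ∀ a : S, x = C a * T n → a ∈ I ^ n := by
  obtain ⟨t, ht⟩ := (IsNoetherian.noetherian I : I.FG)
  let G : Set S[T;T⁻¹] := {T (-1)} ∪ (fun a => C a * T 1) '' (t : Set S)
  have hGf : G.Finite := (Set.finite_singleton _).union (t.finite_toSet.image _)
  refine ⟨Algebra.adjoin S G, ?_, Algebra.subset_adjoin (Or.inl rfl), ?_, ?_⟩
  · have : Algebra.FiniteType S (Algebra.adjoin S G) :=
      (Subalgebra.fg_iff_finiteType _).1 (Subalgebra.fg_def.2 ⟨G, hGf, rfl⟩)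
    exact Algebra.FiniteType.isNoetherianRing S _
  · intro a ha
    rw [← ht] at ha
    induction ha using Submodule.span_induction with
    | mem x hx => exact Algebra.subset_adjoin (Or.inr ⟨x, hx, rfl⟩)
    | zero => simp
    | add x y _ _ hx hy => rw [map_add, add_mul]; exact add_mem hx hy
    | smul r x _ hx =>
      rw [smul_eq_mul, map_mul, mul_assoc]
      exact mul_mem (Subalgebra.algebraMap_mem _ r) hx
  · have key : ∀ x ∈ Algebra.adjoin S G, ∀ n : ℤ, x.coeff n ∈ I ^ n.toNat := by
      intro x hx
      induction hx using Algebra.adjoin_induction with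
      | mem x hx =>
        intro n
        rcases hx with hx | ⟨a, ha, rfl⟩
        · rw [Set.mem_singleton_iff.1 hx, T_apply]
          split_ifs with h
          · subst h; simp
          · exact zero_mem _
        · change (C a * T 1 : S[T;T⁻¹]).coeff n ∈ _
          rw [← single_eq_C_mul_T, AddMonoidAlgebra.coeff_single, Finsupp.single_apply]
          split_ifs with h
          · subst h
            simpa using (ht ▸ Submodule.subset_span ha : a ∈ I)
          · exact zero_mem _
      | algebraMap r =>
        intro n
        change (C r : S[T;T⁻¹]).coeff n ∈ _
        rw [C_apply]
        split_ifs with h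
        · subst h; simp
        · exact zero_mem _
      | add x y _ _ hx hy =>
        intro n
        exact add_mem (hx n) (hy n)
      | mul x y _ _ hx hy =>
        intro n
        rw [AddMonoidAlgebra.coeff_mul]
        refine Ideal.sum_mem _ fun i _ => Ideal.sum_mem _ fun j _ => ?_
        dsimp only
        split_ifs with h
        · refine Ideal.pow_le_pow_right (m := n.toNat) (n := i.toNat + j.toNat) (by lia) ?_
          rw [pow_add]
          exact Ideal.mul_mem_mul (hx i) (hy j)
        · exact zero_mem _
    rintro x hx n a rfl
    have := key _ hx n
    rw [← single_eq_C_mul_T, AddMonoidAlgebra.coeff_single, Finsupp.single_eq_same] at this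
    simpa using this

theorem mem_radical_of_D_mem {K S R : Type*} [Field K] [CharZero K] [CommRing S] [Algebra K S]
    [CommRing R] [Algebra K R] [Algebra S R] [IsScalarTower K S R] [IsNoetherianRing R]
    (I : Ideal S) (u : R) (hu : u ∈ nonZeroDivisors R)
    (huF : ∀ a ∈ I, ∃ y, u * y = algebraMap S R a) {f : S}
    (hfD : D K S f ∈ I • (⊤ : Submodule S Ω[S⁄K])) (F : R) (hF : u * F = algebraMap S R f) :
    F ∈ (Ideal.span {u}).radical := by
  have hdiv : ∀ w ∈ I • (⊤ : Submodule S Ω[S⁄K]),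
      ∃ w' : Ω[R⁄K], KaehlerDifferential.map K K S R w = u • w' := by
    intro w hw
    induction hw using Submodule.smul_induction_on' with
    | smul r hr n hn =>
      obtain ⟨y, hy⟩ := huF r hr
      refine ⟨y • KaehlerDifferential.map K K S R n, ?_⟩
      rw [map_smul, smul_smul, hy, algebraMap_smul]
    | add x _ y _ hx hy =>
      obtain ⟨a, ha⟩ := hx
      obtain ⟨b, hb⟩ := hy
      exact ⟨a + b, by rw [map_add, ha, hb, smul_add]⟩
  obtain ⟨w, hw⟩ := hdiv _ hfD
  rw [KaehlerDifferential.map_D, ← hF, Derivation.leibniz] at hw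
  refine mem_radical_of_D (K := K) u F hu (w - D K R F) ?_
  rw [smul_sub, ← hw, add_sub_cancel_left]

open LaurentPolynomial in
theorem exists_pow_le_of_D {K S : Type*} [Field K] [CharZero K] [CommRing S] [Algebra K S]
    [IsNoetherianRing S] (I J : Ideal S)
    (hJ : ∀ f ∈ J, f ∈ I ∧ D K S f ∈ I • (⊤ : Submodule S Ω[S⁄K])) :
    ∃ N : ℕ, J ^ N ≤ I ^ (N + 1) := by
  obtain ⟨R, hR, hT, hIR, hco⟩ := exists_rees I
  let u : R := ⟨T (-1), hT⟩
  let F : (f : S) → f ∈ I → R := fun f hf => ⟨C f * T 1, hIR f hf⟩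
  have hTT : (T (-1) * T 1 : S[T;T⁻¹]) = 1 := by rw [← T_add]; simp
  have huF : ∀ f (hf : f ∈ I), u * F f hf = algebraMap S R f := by
    intro f hf
    apply Subtype.ext
    change T (-1) * (C f * T 1) = (C f : S[T;T⁻¹])
    rw [mul_left_comm, hTT, mul_one]
  have hu : u ∈ nonZeroDivisors R := by
    rw [mem_nonZeroDivisors_iff_right]
    intro x hx
    apply Subtype.ext
    have h1 : x.1 * T (-1) = 0 := congrArg Subtype.val hx
    calc x.1 = (x.1 * T (-1)) * T 1 := by rw [mul_assoc, hTT, mul_one]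
      _ = 0 := by rw [h1, zero_mul]
  let J' : Ideal R := Ideal.span (Set.range fun f : J => F f (hJ f f.2).1)
  have hJ' : J' ≤ (Ideal.span {u}).radical := by
    rw [Ideal.span_le]
    rintro _ ⟨⟨f, hf⟩, rfl⟩
    obtain ⟨hfI, hfD⟩ := hJ f hf
    exact mem_radical_of_D_mem (K := K) I u hu (fun a ha => ⟨F a ha, huF a ha⟩) hfD _ (huF f hfI)
  obtain ⟨N, hN⟩ := Ideal.exists_pow_le_of_le_radical_of_fg hJ' (IsNoetherian.noetherian _)
  refine ⟨N, ?_⟩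
  have hpow : ∀ n : ℕ, ∀ g ∈ J ^ n, ∃ x ∈ J' ^ n, (x : S[T;T⁻¹]) = C g * T n := by
    intro n
    induction n with
    | zero =>
      intro g _
      exact ⟨algebraMap S R g, by simp, by simp⟩
    | succ n ih =>
      intro g hg
      rw [pow_succ] at hg
      refine Submodule.mul_induction_on hg ?_ ?_
      · intro a ha b hb
        obtain ⟨x, hx, hxa⟩ := ih a ha
        refine ⟨x * F b (hJ b hb).1, ?_, ?_⟩
        · rw [pow_succ]
          exact Ideal.mul_mem_mul hx (Ideal.subset_span ⟨⟨b, hb⟩, rfl⟩)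
        · change (x : S[T;T⁻¹]) * (C b * T 1) = _
          rw [hxa, map_mul, Nat.cast_succ, T_add]
          ring
      · rintro a b ⟨x, hx, hxa⟩ ⟨y, hy, hyb⟩
        refine ⟨x + y, add_mem hx hy, ?_⟩
        change (x : S[T;T⁻¹]) + y = _
        rw [hxa, hyb, map_add, add_mul]
  intro g hg
  obtain ⟨x, hx, hxg⟩ := hpow N g hg
  obtain ⟨y, hy⟩ := Ideal.mem_span_singleton.1 (hN hx)
  refine hco y y.2 (N + 1) g ?_
  have h1 : x.1 = T (-1) * y.1 := congrArg Subtype.val hy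
  rw [Nat.cast_succ, T_add, ← mul_assoc, ← hxg, h1, mul_right_comm, hTT, one_mul]

/-- Let `K` be a field of characteristic zero and `S` a smooth `K`-algebra, essentially of
finite type over `K`. Given a radical ideal `I ⊆ S`, there exists a positive integer `N`
such that `(I^{(2)})^n ⊆ I^{n+1}` for all `n ≥ N`. -/
theorem exists_pow_symbolicPower_two_le {K S : Type u} [Field K] [CharZero K]
    [CommRing S] [Algebra K S] [Algebra.EssFiniteType K S] [Algebra.FormallySmooth K S]
    (I : Ideal S) (hI : I.IsRadical) :
    ∃ N : ℕ, 0 < N ∧ ∀ n : ℕ, N ≤ n → (symbolicPower I 2) ^ n ≤ I ^ (n + 1) := by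
  have : IsNoetherianRing S := Algebra.EssFiniteType.isNoetherianRing K S
  have : Module.Projective S Ω[S⁄K] := Algebra.FormallySmooth.projective_kaehlerDifferential
  have hJ : ∀ f ∈ symbolicPower I 2, f ∈ I ∧ D K S f ∈ I • (⊤ : Submodule S Ω[S⁄K]) :=
    fun f hf => symbolicPower_two_spec I hI hf
  obtain ⟨N, hN⟩ := exists_pow_le_of_D (K := K) I (symbolicPower I 2) hJ
  refine ⟨N + 1, Nat.succ_pos N, fun n hn => ?_⟩
  obtain ⟨m, rfl⟩ : ∃ m, n = N + m := ⟨n - N, by lia⟩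
  rw [pow_add, show N + m + 1 = (N + 1) + m by ring, pow_add (I)]
  exact Ideal.mul_mono hN (Ideal.pow_right_mono (fun f hf => (hJ f hf).1) m)
end
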